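/- Let T be a tree on n ≥ 3 vertices with diameter d. Then d_{n−3}(T)/d_{n−2}(T) < (1/3)·n·d, where d_{n−3}(T) and d_{n−2}(T) are the normalized coefficients of the distance characteristic polynomial of T. -/

import Mathlib

/-!
Write `D` for the distance matrix and `δ_k` for the coefficients of `det (D - x I)`. Up to sign,
`δ_{n-k}` is the `k`-th elementary symmetric function of the (real) eigenvalues of `D`. As
`tr D = 0`, Newton's identities give `|δ_{n-2}| = tr D² / 2` and `|δ_{n-3}| = tr D³ / 3`, so the
ratio in question equals `tr D³ / (3 tr D²)`, and it suffices to show `tr D³ < n d tr D²`.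

This inequality follows termwise, bounding one distance by the diameter and applying AM-GM to the
other two: `D i j * D j k * D k i ≤ d * (D i j ^ 2 + D j k ^ 2) / 2`. Summing the right-hand side
over all `i, j, k` gives `n d tr D²`, and the bound is strict whenever `k = i ≠ j`.
-/

/-- The distance matrix of a graph `G`: the `(i,j)` entry is the graph
distance between `i` and `j`. -/
noncomputable def distMatrix {n : ℕ} (G : SimpleGraph (Fin n)) :
    Matrix (Fin n) (Fin n) ℝ :=
  fun i j => (G.dist i j : ℝ)

/-- The polynomial `det(𝒟(G) - xI)`, whose coefficient of `x^k` is `δ_k(G)`. -/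
noncomputable def deltaPoly {n : ℕ} (G : SimpleGraph (Fin n)) : Polynomial ℝ :=
  ((distMatrix G).map Polynomial.C
    - (Polynomial.X : Polynomial ℝ) • (1 : Matrix (Fin n) (Fin n) (Polynomial ℝ))).det

/-- The normalized coefficients `d_k(G) = 2^{k-n+2} |δ_k(G)|`. -/
noncomputable def normCoeff {n : ℕ} (G : SimpleGraph (Fin n)) (k : ℕ) : ℝ :=
  ((2 : ℝ) ^ k / (2 : ℝ) ^ (n - 2)) * |(deltaPoly G).coeff k|

open Matrix Polynomial

theorem deltaPoly_eq_charpoly {n : ℕ} (G : SimpleGraph (Fin n)) :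
    deltaPoly G = (-1) ^ n * (distMatrix G).charpoly := by
  have h : (distMatrix G).map Polynomial.C
      - (X : ℝ[X]) • (1 : Matrix (Fin n) (Fin n) ℝ[X]) = -(distMatrix G).charmatrix := by
    rw [charmatrix, neg_sub, Matrix.smul_one_eq_diagonal]
    rfl
  rw [deltaPoly, h, det_neg, Fintype.card_fin, Matrix.charpoly]

theorem distMatrix_isHermitian {n : ℕ} (G : SimpleGraph (Fin n)) :
    (distMatrix G).IsHermitian := by
  ext i j
  simp [distMatrix, SimpleGraph.dist_comm]

theorem trace_pow_eq_sum_eigenvalues {n : ℕ} {A : Matrix (Fin n) (Fin n) ℝ}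
    (hA : A.IsHermitian) (k : ℕ) : (A ^ k).trace = ∑ i, hA.eigenvalues i ^ k := by
  conv_lhs => rw [hA.spectral_theorem, ← map_pow, Unitary.conjStarAlgAut_apply, trace_mul_cycle,
    Unitary.coe_star_mul_self, one_mul, diagonal_pow, trace_diagonal]
  simp

/-- Vieta's formula, with the elementary symmetric function evaluated at the eigenvalues. -/
theorem abs_coeff_deltaPoly {n k : ℕ} (G : SimpleGraph (Fin n)) (hk : k ≤ n) :
    |(deltaPoly G).coeff (n - k)| =
      |MvPolynomial.aeval (distMatrix_isHermitian G).eigenvalues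
        (MvPolynomial.esymm (Fin n) ℝ k)| := by
  have hH := distMatrix_isHermitian G
  have h1 : ((-1 : ℝ[X]) ^ n) = C ((-1) ^ n) := by simp
  have h2 := Multiset.prod_X_sub_C_coeff (Finset.univ.val.map hH.eigenvalues) (k := n - k) (by simp)
  rw [Multiset.map_map] at h2
  rw [deltaPoly_eq_charpoly, h1, coeff_C_mul, hH.charpoly_eq, abs_mul, abs_pow, abs_neg, abs_one,
    one_pow, one_mul, MvPolynomial.aeval_esymm_eq_multiset_esymm]
  have h3 : n - (n - k) = k := by omega
  simp only [Multiset.card_map, Finset.card_val, Finset.card_univ, Fintype.card_fin, h3] at h2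
  have h4 := congrArg abs h2
  rw [abs_mul, abs_pow, abs_neg, abs_one, one_pow, one_mul] at h4
  exact h4

theorem trace_distMatrix {n : ℕ} (G : SimpleGraph (Fin n)) : (distMatrix G).trace = 0 := by
  simp [Matrix.trace, distMatrix]

theorem aeval_psum_eigenvalues {n : ℕ} (G : SimpleGraph (Fin n)) (k : ℕ) :
    MvPolynomial.aeval (distMatrix_isHermitian G).eigenvalues (MvPolynomial.psum (Fin n) ℝ k) =
      (distMatrix G ^ k).trace := by
  rw [trace_pow_eq_sum_eigenvalues (distMatrix_isHermitian G)]
  simp [MvPolynomial.psum]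

theorem two_mul_aeval_esymm_two {n : ℕ} (G : SimpleGraph (Fin n)) :
    2 * MvPolynomial.aeval (distMatrix_isHermitian G).eigenvalues
      (MvPolynomial.esymm (Fin n) ℝ 2) = -(distMatrix G ^ 2).trace := by
  have h := congrArg (MvPolynomial.aeval (distMatrix_isHermitian G).eigenvalues)
    (MvPolynomial.mul_esymm_eq_sum (Fin n) ℝ 2)
  have hs : {a ∈ Finset.HasAntidiagonal.antidiagonal 2 | a.1 < 2} = {(0, 2), (1, 1)} := by decide
  rw [hs, Finset.sum_pair (by decide)] at h
  simp only [map_mul, map_add, map_pow, map_neg, map_one, map_natCast, MvPolynomial.esymm_zero,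
    aeval_psum_eigenvalues, pow_one, trace_distMatrix] at h
  push_cast at h
  linarith

theorem three_mul_aeval_esymm_three {n : ℕ} (G : SimpleGraph (Fin n)) :
    3 * MvPolynomial.aeval (distMatrix_isHermitian G).eigenvalues
      (MvPolynomial.esymm (Fin n) ℝ 3) = (distMatrix G ^ 3).trace := by
  have h := congrArg (MvPolynomial.aeval (distMatrix_isHermitian G).eigenvalues)
    (MvPolynomial.mul_esymm_eq_sum (Fin n) ℝ 3)
  have hs : {a ∈ Finset.HasAntidiagonal.antidiagonal 3 | a.1 < 3} = {(0, 3), (1, 2), (2, 1)} := by decide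
  rw [hs, Finset.sum_insert (by decide), Finset.sum_pair (by decide)] at h
  -- The terms with `(1, 2)` and `(2, 1)` vanish: both contain the factor `tr D = 0`.
  simp only [map_mul, map_add, map_pow, map_neg, map_one, map_natCast, MvPolynomial.esymm_zero,
    MvPolynomial.esymm_one, ← MvPolynomial.psum_one, aeval_psum_eigenvalues, pow_one, trace_distMatrix] at h
  push_cast at h
  linarith

theorem trace_distMatrix_sq {n : ℕ} (G : SimpleGraph (Fin n)) :
    (distMatrix G ^ 2).trace = ∑ i, ∑ j, distMatrix G i j ^ 2 := by
  simp only [pow_two, Matrix.trace, diag_apply, mul_apply]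
  refine Finset.sum_congr rfl fun i _ => Finset.sum_congr rfl fun j _ => ?_
  rw [show distMatrix G j i = distMatrix G i j by simp [distMatrix, SimpleGraph.dist_comm]]

theorem trace_distMatrix_cube {n : ℕ} (G : SimpleGraph (Fin n)) :
    (distMatrix G ^ 3).trace =
      ∑ i, ∑ j, ∑ k, distMatrix G i j * distMatrix G j k * distMatrix G k i := by
  simp only [pow_succ, pow_zero, one_mul, Matrix.trace, diag_apply, mul_apply, Finset.sum_mul]
  exact Finset.sum_congr rfl fun i _ => Finset.sum_comm

theorem distMatrix_le_diam {n : ℕ} {G : SimpleGraph (Fin n)} (hG : G.Connected) (i j : Fin n) :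
    distMatrix G i j ≤ G.diam := by
  have := hG.nonempty
  exact Nat.cast_le.mpr
    (SimpleGraph.dist_le_diam (SimpleGraph.connected_iff_ediam_ne_top.mp hG))

theorem sum_triples_eq {n : ℕ} (G : SimpleGraph (Fin n)) :
    ∑ i, ∑ j, ∑ k, (G.diam : ℝ) * (distMatrix G i j ^ 2 + distMatrix G j k ^ 2) / 2 =
      n * G.diam * (distMatrix G ^ 2).trace := by
  have h1 : ∑ i, ∑ j, ∑ _k : Fin n, distMatrix G i j ^ 2 = n * (distMatrix G ^ 2).trace := by
    simp [trace_distMatrix_sq, Finset.mul_sum]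
  have h2 : ∑ _i : Fin n, ∑ j, ∑ k, distMatrix G j k ^ 2 = n * (distMatrix G ^ 2).trace := by
    simp [trace_distMatrix_sq]
  simp only [← Finset.sum_div, ← Finset.mul_sum, Finset.sum_add_distrib, h1, h2]
  ring

theorem trace_cube_lt {n : ℕ} (hn : 3 ≤ n) {G : SimpleGraph (Fin n)} (hG : G.Connected) :
    (distMatrix G ^ 3).trace < n * G.diam * (distMatrix G ^ 2).trace := by
  have h0 : ∀ i j, 0 ≤ distMatrix G i j := fun i j => Nat.cast_nonneg _
  have hle : ∀ i j k, distMatrix G i j * distMatrix G j k * distMatrix G k i ≤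
      (G.diam : ℝ) * (distMatrix G i j ^ 2 + distMatrix G j k ^ 2) / 2 := by
    intro i j k
    have h1 := mul_le_mul_of_nonneg_left (distMatrix_le_diam hG k i)
      (mul_nonneg (h0 i j) (h0 j k))
    have h2 := mul_nonneg (Nat.cast_nonneg (α := ℝ) G.diam)
      (sq_nonneg (distMatrix G i j - distMatrix G j k))
    nlinarith
  -- The term `(a, b, a)` with `a ≠ b` witnesses strictness.
  let a : Fin n := ⟨0, by omega⟩
  let b : Fin n := ⟨1, by omega⟩
  have hab : 0 < distMatrix G a b := by
    exact Nat.cast_pos.mpr (hG.pos_dist_of_ne (by simp [a, b]))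
  have hd : (0 : ℝ) < G.diam := hab.trans_le (distMatrix_le_diam hG a b)
  rw [trace_distMatrix_cube, ← sum_triples_eq]
  refine Finset.sum_lt_sum
    (fun i _ => Finset.sum_le_sum fun j _ => Finset.sum_le_sum fun k _ => hle i j k)
    ⟨a, Finset.mem_univ _, Finset.sum_lt_sum
      (fun j _ => Finset.sum_le_sum fun k _ => hle a j k)
      ⟨b, Finset.mem_univ _, Finset.sum_lt_sum (fun k _ => hle a b k)
        ⟨a, Finset.mem_univ _, ?_⟩⟩⟩
  have haa : distMatrix G a a = 0 := by simp [distMatrix]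
  rw [haa, mul_zero]
  positivity

theorem trace_cube_nonneg {n : ℕ} (G : SimpleGraph (Fin n)) : 0 ≤ (distMatrix G ^ 3).trace := by
  rw [trace_distMatrix_cube]
  exact Finset.sum_nonneg fun i _ => Finset.sum_nonneg fun j _ => Finset.sum_nonneg fun k _ =>
    mul_nonneg (mul_nonneg (Nat.cast_nonneg _) (Nat.cast_nonneg _)) (Nat.cast_nonneg _)

theorem trace_sq_pos {n : ℕ} (hn : 3 ≤ n) {G : SimpleGraph (Fin n)} (hG : G.Connected) :
    0 < (distMatrix G ^ 2).trace := by
  have h3 := trace_cube_nonneg G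
  exact pos_of_mul_pos_right (h3.trans_lt (trace_cube_lt hn hG)) (by positivity)

/-- For a tree `T` on `n ≥ 3` vertices with diameter `d`,
`d_{n-3}(T) / d_{n-2}(T) < (1/3) n d`. -/
theorem normCoeff_ratio_lt (n : ℕ) (hn : 3 ≤ n)
    (G : SimpleGraph (Fin n)) (hG : G.IsTree) :
    normCoeff G (n - 3) / normCoeff G (n - 2) < (1 / 3 : ℝ) * n * (G.diam : ℝ) := by
  have hS := trace_sq_pos hn hG.connected
  have hlt := trace_cube_lt hn hG.connected
  have h3 := trace_cube_nonneg G
  have c2 : |(deltaPoly G).coeff (n - 2)| = (distMatrix G ^ 2).trace / 2 := by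
    have h := two_mul_aeval_esymm_two G
    rw [abs_coeff_deltaPoly G (by omega), abs_of_nonpos (by linarith)]
    linarith
  have c3 : |(deltaPoly G).coeff (n - 3)| = (distMatrix G ^ 3).trace / 3 := by
    have h := three_mul_aeval_esymm_three G
    rw [abs_coeff_deltaPoly G hn, abs_of_nonneg (by linarith)]
    linarith
  have hp : (2 : ℝ) ^ (n - 2) = 2 * 2 ^ (n - 3) := by
    rw [show n - 2 = (n - 3) + 1 by omega, pow_succ]
    ring
  have e2 : normCoeff G (n - 2) = (distMatrix G ^ 2).trace / 2 := by
    rw [normCoeff, c2, div_self (by positivity), one_mul]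
  have e3 : normCoeff G (n - 3) = (distMatrix G ^ 3).trace / 6 := by
    rw [normCoeff, c3, hp]
    field_simp
    ring
  rw [e2, e3, div_lt_iff₀ (by positivity)]
  linarith
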